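/- Let A be a finite alphabet with |A| ≥ 2 and let k be a positive integer. For each n, among all presentations ⟨A|R⟩ where R is a set of exactly k relations and the sum relation length is n, let p_L(n) and p_R(n) denote the proportions of those presentations whose presented monoid is left cancellative, respectively right cancellative. Then p_L(n) → ((|A|-1)/|A|)^k and p_R(n) → ((|A|-1)/|A|)^k as n → ∞. -/

import Mathlib

open FreeMonoid

/-- The congruence on the free monoid generated by a presentation `R`. -/
def presCon {A : Type*} (R : Set (FreeMonoid A × FreeMonoid A)) : Con (FreeMonoid A) :=
  conGen fun u v => (u, v) ∈ R

/-- `w` is a relation word of the presentation `R`. -/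
def IsRelWord {A : Type*} (R : Set (FreeMonoid A × FreeMonoid A)) (w : FreeMonoid A) : Prop :=
  ∃ p ∈ R, p.1 = w ∨ p.2 = w

/-- `u` is a factor of `w`. -/
def IsFactor {A : Type*} (u w : FreeMonoid A) : Prop := ∃ p q, w = p * u * q

/-- `u` is a piece of the presentation `R`: it is empty, or occurs as a factor of two
distinct relation words, or in two different (possibly overlapping) positions within
one relation word. -/
def IsPiece {A : Type*} (R : Set (FreeMonoid A × FreeMonoid A)) (u : FreeMonoid A) : Prop :=
  u = 1 ∨
  (∃ w₁ w₂, IsRelWord R w₁ ∧ IsRelWord R w₂ ∧ w₁ ≠ w₂ ∧ IsFactor u w₁ ∧ IsFactor u w₂) ∨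
  (∃ w, IsRelWord R w ∧ ∃ p q p' q', w = p * u * q ∧ w = p' * u * q' ∧ p ≠ p')

/-- The small overlap condition `C(m)`: no relation word is a product of strictly fewer
than `m` pieces. -/
def SmallOverlapC {A : Type*} (R : Set (FreeMonoid A × FreeMonoid A)) (m : ℕ) : Prop :=
  ∀ w, IsRelWord R w → ∀ l : List (FreeMonoid A),
    (∀ x ∈ l, IsPiece R x) → l.prod = w → m ≤ l.length

/-- The number of `k`-relation presentations over `A` of sum relation length `n`
satisfying the predicate `P`. -/
noncomputable def presCount {A : Type*} (k n : ℕ)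
    (P : Set (FreeMonoid A × FreeMonoid A) → Prop) : ℕ :=
  Nat.card {R : Finset (FreeMonoid A × FreeMonoid A) //
    R.card = k ∧ ∑ p ∈ R, (p.1.length + p.2.length) = n ∧
    P (↑R : Set (FreeMonoid A × FreeMonoid A))}

/-!
Dividing out the `k!` orderings, a presentation with `k` relations and sum relation length `n` is
a family of `2 * k` words of total length `n`, apart from the families in which a relation is
repeated. To choose such a family uniformly is to choose a composition of `n`, the lengths of the
words, and then all letters independently. With probability tending to `1`, all `2 * k` words
have length at least `2 * √n` and no word of length at least `√n` occurs in them twice.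

Under these conditions on the relation words, the presented monoid is left cancellative if and
only if no relation has two sides with the same first letter. For if `a * u = a * v` is a
relation, then no relation word is a factor of `u`, so `u` cannot be rewritten to `v`.
Conversely, if the sides of every relation start with different letters, then a rewriting of
`a * y` which replaces the letter `a` can only restore it by undoing that replacement, because no
relation word can straddle the beginning of a word which has been substituted. The first letters
of the `2 * k` words are independent and uniformly distributed, so the two sides of all `k`
relations start with different letters with probability `((|A| - 1) / |A|) ^ k`.

Reversing all words exchanges left and right cancellativity.
-/

section Rewriting

/-- One elementary transition of the rewriting system `r` on a monoid: some factor `u` of `x` is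
replaced by some `v` with `r u v`. -/
def RewriteStep {M : Type*} [Mul M] (r : M → M → Prop) (x y : M) : Prop :=
  ∃ p u v s, r u v ∧ x = p * (u * s) ∧ y = p * (v * s)

theorem RewriteStep.mul_left_mul_right {M : Type*} [Semigroup M] {r : M → M → Prop} {x y : M}
    (h : RewriteStep r x y) (a b : M) : RewriteStep r (a * (x * b)) (a * (y * b)) := by
  obtain ⟨p, u, v, s, huv, rfl, rfl⟩ := h
  exact ⟨a * p, u, v, s * b, huv, by simp only [mul_assoc], by simp only [mul_assoc]⟩

theorem conGen_le_reflTransGen_rewriteStep {M : Type*} [Monoid M] {r : M → M → Prop}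
    [Std.Symm r] {x y : M} (h : conGen r x y) :
    Relation.ReflTransGen (RewriteStep r) x y := by
  have : Std.Symm (RewriteStep r) :=
    ⟨fun _ _ ⟨p, u, v, s, huv, hx, hy⟩ => ⟨p, v, u, s, symm huv, hy, hx⟩⟩
  have congr (a b : M) {x y : M} (h : Relation.ReflTransGen (RewriteStep r) x y) :
      Relation.ReflTransGen (RewriteStep r) (a * (x * b)) (a * (y * b)) :=
    h.lift (fun x => a * (x * b)) fun _ _ hs => hs.mul_left_mul_right a b
  induction (h : ConGen.Rel r x y) with
  | of x y hxy => exact .single ⟨1, x, y, 1, hxy, by simp, by simp⟩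
  | refl => exact .refl
  | symm _ ih => exact symm ih
  | trans _ _ ih₁ ih₂ => exact ih₁.trans ih₂
  | @mul w x y z _ _ ih₁ ih₂ =>
    have h₁ := congr 1 y ih₁
    have h₂ := congr x 1 ih₂
    simp only [one_mul, mul_one] at h₁ h₂
    exact h₁.trans h₂

end Rewriting

section Quotient

variable {M : Type*} [Mul M] (c : Con M)

theorem isLeftCancelMul_quotient_iff :
    IsLeftCancelMul c.Quotient ↔ ∀ x y z, c (x * y) (x * z) → c y z := by
  refine ⟨fun _ x y z h => ?_, fun h => ⟨fun x y z hyz => ?_⟩⟩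
  · rw [← Con.eq, Con.coe_mul, Con.coe_mul] at h
    exact (Con.eq c).1 (mul_left_cancel h)
  · induction x, y using Con.induction_on₂ with | _ x y
    induction z using Con.induction_on with | _ z
    exact (Con.eq c).2 (h x y z ((Con.eq c).1 hyz))

theorem isRightCancelMul_quotient_iff :
    IsRightCancelMul c.Quotient ↔ ∀ x y z, c (y * x) (z * x) → c y z := by
  refine ⟨fun _ x y z h => ?_, fun h => ⟨fun x y z hyz => ?_⟩⟩
  · rw [← Con.eq, Con.coe_mul, Con.coe_mul] at h
    exact (Con.eq c).1 (mul_right_cancel h)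
  · induction x, y using Con.induction_on₂ with | _ x y
    induction z using Con.induction_on with | _ z
    exact (Con.eq c).2 (h x y z ((Con.eq c).1 hyz))

end Quotient

section Cancellation

variable {A : Type*}

theorem freeMonoid_mul_eq_mul_iff {a b c d : FreeMonoid A} :
    a * b = c * d ↔ (∃ m, c = a * m ∧ b = m * d) ∨ ∃ m, a = c * m ∧ d = m * b :=
  List.append_eq_append_iff

/-- `u = v` is one of the relations of `R`, up to exchanging its two sides. -/
def IsRelation (R : Set (FreeMonoid A × FreeMonoid A)) (u v : FreeMonoid A) : Prop :=
  (u, v) ∈ R ∨ (v, u) ∈ R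

/-- The words `u` and `v` do not start with the same letter. (Two empty words do not count as
having distinct heads.) -/
def DistinctHeads (u v : FreeMonoid A) : Prop :=
  u.toList.head? ≠ v.toList.head?

/-- A quantitative small overlap condition: a factor of length at least `l` of a relation word
determines the relation, its orientation and the position of the factor, and every relation word
consists of at least two such factors. -/
structure HasUniqueFactors (R : Set (FreeMonoid A × FreeMonoid A)) (l : ℕ) : Prop where
  two_mul_le_length {u v : FreeMonoid A} : IsRelation R u v → 2 * l ≤ u.length
  unique {u u' w w' p s q p' q' : FreeMonoid A} : IsRelation R u u' → IsRelation R w w' →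
    l ≤ s.length → u = p * (s * q) → w = p' * (s * q') → u = w ∧ u' = w' ∧ p = p'

/-- The word `z` meets the relation words of `R` in factors of length less than `l` only, unless
it is a relation word itself. -/
def IsIsolated (R : Set (FreeMonoid A × FreeMonoid A)) (l : ℕ) (z : FreeMonoid A) : Prop :=
  ∀ ⦃u u' p s q p' q' : FreeMonoid A⦄, IsRelation R u u' → l ≤ s.length → z = p * (s * q) →
    u = p' * (s * q') → z = u ∧ p = p'

/-- `TailRewrite R l z t W` says that `W` is obtained from `z * t` by rewriting which never
replaces an occurrence of a relation word reaching `l` or more letters into the prefix `z`. Either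
only `t` has been rewritten, or `t` has been rewritten to `w' * t'` such that a nonempty suffix
`s` of `z` shorter than `l` makes `s * w'` a relation word, `s * w'` has been replaced by the
other side `w` of its relation, and `w * t'` has been rewritten recursively in the same manner. -/
inductive TailRewrite (R : Set (FreeMonoid A × FreeMonoid A)) (l : ℕ) :
    FreeMonoid A → FreeMonoid A → FreeMonoid A → Prop
  | tail {z t t' : FreeMonoid A} (ht : presCon R t t') : TailRewrite R l z t (z * t')
  | overlap {p s w w' t t' Y : FreeMonoid A} (hs : s ≠ 1) (hsl : s.length < l)
      (hw : IsRelation R (s * w') w) (ht : presCon R t (w' * t')) (hY : TailRewrite R l w t' Y) :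
      TailRewrite R l (p * s) t (p * Y)

variable {R : Set (FreeMonoid A × FreeMonoid A)} {l : ℕ}

theorem IsRelation.symm {u v : FreeMonoid A} (h : IsRelation R u v) : IsRelation R v u :=
  Or.symm h

instance : Std.Symm (IsRelation R) :=
  ⟨fun _ _ => IsRelation.symm⟩

theorem presCon_of_isRelation {u v : FreeMonoid A} (h : IsRelation R u v) : presCon R u v :=
  h.elim (fun h => ConGen.Rel.of u v h) fun h => ConGen.Rel.symm (ConGen.Rel.of v u h)

theorem presCon_mul_left (p : FreeMonoid A) {x y : FreeMonoid A} (h : presCon R x y) :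
    presCon R (p * x) (p * y) :=
  (presCon R).mul ((presCon R).refl p) h

theorem presCon_of_rewriteStep {x y : FreeMonoid A} (h : RewriteStep (IsRelation R) x y) :
    presCon R x y := by
  obtain ⟨p, u, v, s, huv, rfl, rfl⟩ := h
  exact presCon_mul_left p ((presCon R).mul (presCon_of_isRelation huv) ((presCon R).refl s))

theorem reflTransGen_of_presCon {x y : FreeMonoid A} (h : presCon R x y) :
    Relation.ReflTransGen (RewriteStep (IsRelation R)) x y :=
  conGen_le_reflTransGen_rewriteStep (Con.conGen_mono (fun _ _ => Or.inl) h)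

theorem DistinctHeads.symm {u v : FreeMonoid A} (h : DistinctHeads u v) : DistinctHeads v u :=
  Ne.symm h

theorem head?_mul_of_ne_one {u : FreeMonoid A} (hu : u ≠ 1) (v : FreeMonoid A) :
    (u * v).toList.head? = u.toList.head? :=
  List.head?_append_of_ne_nil _ hu

theorem ne_one_of_length_pos {u : FreeMonoid A} (hu : 0 < u.length) : u ≠ 1 :=
  fun h => hu.ne' (length_eq_zero.2 h)

theorem HasUniqueFactors.isIsolated (hR : HasUniqueFactors R l) {u v : FreeMonoid A}
    (huv : IsRelation R u v) : IsIsolated R l u := by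
  intro w w' p s q p' q' hw hs hu hw'
  obtain ⟨huw, -, hpp⟩ := hR.unique huv hw hs hu hw'
  exact ⟨huw, hpp⟩

theorem HasUniqueFactors.right_unique (hR : HasUniqueFactors R l) {u v v' : FreeMonoid A}
    (hv : IsRelation R u v) (hv' : IsRelation R u v') : v = v' :=
  (hR.unique hv hv' ((Nat.le_mul_of_pos_left l two_pos).trans (hR.two_mul_le_length hv))
    (p := 1) (q := 1) (p' := 1) (q' := 1) (by simp) (by simp)).2.1

theorem isIsolated_of_length_lt {z : FreeMonoid A} (hz : z.length < l) : IsIsolated R l z := by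
  intro u u' p s q p' q' _ hs h _
  have := congrArg length h
  simp only [length_mul] at this
  omega

namespace TailRewrite

theorem exists_prefix (hl : 0 < l) {z t W : FreeMonoid A} (h : TailRewrite R l z t W) :
    ∃ p s Y, s.length < l ∧ z = p * s ∧ W = p * Y := by
  cases h with
  | @tail z t t' ht => exact ⟨z, 1, t', hl, (mul_one z).symm, rfl⟩
  | @overlap p s w w' t t' Y hs hsl hw ht hY => exact ⟨p, s, Y, hsl, rfl, rfl⟩

theorem head?_eq (hl : 0 < l) {z t W : FreeMonoid A} (h : TailRewrite R l z t W)
    (hz : l ≤ z.length) : W.toList.head? = z.toList.head? := by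
  obtain ⟨p, s, Y, hs, rfl, rfl⟩ := h.exists_prefix hl
  have hp : p ≠ 1 := ne_one_of_length_pos (by simp only [length_mul] at hz; omega)
  rw [head?_mul_of_ne_one hp, head?_mul_of_ne_one hp]

theorem step_of_tail (hl : 0 < l) (hR : HasUniqueFactors R l) {z t t' W : FreeMonoid A}
    (hz : IsIsolated R l z) (ht : presCon R t t') (hW : RewriteStep (IsRelation R) (z * t') W) :
    TailRewrite R l z t W ∨
      ∃ z' t', IsRelation R z z' ∧ presCon R t t' ∧ W = z' * t' := by
  obtain ⟨α, x, x', β, hx, hzt, rfl⟩ := hW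
  have hxl := hR.two_mul_le_length hx
  obtain ⟨m, rfl, rfl⟩ | ⟨s, rfl, hxβ⟩ := freeMonoid_mul_eq_mul_iff.1 hzt
  · left
    rw [mul_assoc]
    exact .tail ((presCon R).trans ht (presCon_of_rewriteStep ⟨m, x, x', β, hx, rfl, rfl⟩))
  obtain ⟨m, rfl, rfl⟩ | ⟨w', rfl, rfl⟩ := freeMonoid_mul_eq_mul_iff.1 hxβ
  · right
    obtain ⟨hxz, rfl⟩ := hz hx (by omega) rfl (p' := 1) (q' := 1) (by simp)
    obtain rfl : m = 1 := by simpa using hxz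
    exact ⟨x', t', by simpa using hx, ht, by simp⟩
  by_cases hsl : l ≤ s.length
  · right
    obtain ⟨hxz, rfl⟩ := hz hx hsl (p := α) (q := 1) (by simp) (p' := 1) (q' := w') (by simp)
    obtain rfl : w' = 1 := by simpa using hxz
    exact ⟨x', β, by simpa using hx, by simpa using ht, one_mul _⟩
  left
  by_cases hs : s = 1
  · subst hs
    simp only [mul_one, one_mul] at hx ⊢
    exact .tail ((presCon R).trans ht (presCon_of_rewriteStep ⟨1, w', x', β, hx, by simp, by simp⟩))
  · exact .overlap hs (not_le.1 hsl) hx ht (.tail ((presCon R).refl β))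

/-- If the part `γ` of `x` is long, then `x = γ * s`, and `Y` starts with the first letter of `s`,
although `w`, and hence `Y`, starts with a different one. If `γ` is short, then `x` and `w` have a
long common factor at different positions. -/
theorem no_straddle (hl : 0 < l) (hR : HasUniqueFactors R l)
    (hheads : ∀ u v, IsRelation R u v → DistinctHeads u v)
    {α γ s w w' t Y x x' β : FreeMonoid A} (hz : IsIsolated R l (α * γ * s)) (hs : s ≠ 1)
    (hw : IsRelation R (s * w') w) (hY : TailRewrite R l w t Y) (hx : IsRelation R x x')
    (hγ : γ ≠ 1) : γ * Y ≠ x * β := by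
  intro h
  have hxl := hR.two_mul_le_length hx
  have hwl := hR.two_mul_le_length hw.symm
  have hs' : s.length ≠ 0 := mt length_eq_zero.1 hs
  obtain ⟨m, rfl, hYm⟩ | ⟨m, rfl, -⟩ := freeMonoid_mul_eq_mul_iff.1 h
  · by_cases hγl : l ≤ γ.length
    · obtain ⟨hzx, rfl⟩ := hz hx hγl (p := α) (q := s) (by simp only [mul_assoc]) (p' := 1)
        (one_mul _).symm
      obtain rfl : s = m := by simpa using hzx
      refine hheads _ _ hw ?_
      rw [← hY.head?_eq hl (by omega), hYm, head?_mul_of_ne_one hs, head?_mul_of_ne_one hs]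
    obtain ⟨v, r, Y', hr, rfl, rfl⟩ := hY.exists_prefix hl
    simp only [length_mul] at hxl hwl
    obtain ⟨c, rfl, -⟩ | ⟨c, rfl, -⟩ := freeMonoid_mul_eq_mul_iff.1 hYm
    · exact hγ (hR.unique hx hw.symm (s := v) (by omega) rfl (p' := 1) (by simp; rfl)).2.2
    · exact hγ (hR.unique hx hw.symm (s := m) (q := 1) (by omega) (by simp) (p' := 1)
        (q' := c * r) (by simp [mul_assoc])).2.2
  · obtain ⟨hzx, -⟩ := hz hx (by omega) (p := α) (s := x) (q := m * s) (by simp only [mul_assoc])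
      (p' := 1) (q' := 1) (by simp)
    have := congrArg length hzx
    simp only [length_mul] at this
    omega

theorem step (hl : 0 < l) (hR : HasUniqueFactors R l)
    (hheads : ∀ u v, IsRelation R u v → DistinctHeads u v) {z t W W' : FreeMonoid A}
    (hz : IsIsolated R l z) (h : TailRewrite R l z t W)
    (hW : RewriteStep (IsRelation R) W W') :
    TailRewrite R l z t W' ∨ ∃ z' t', IsRelation R z z' ∧ presCon R t t' ∧ W' = z' * t' := by
  induction h generalizing W' with
  | tail ht => exact step_of_tail hl hR hz ht hW
  | @overlap p s w w' t t' Y hs hsl hw ht hY ih =>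
    left
    obtain ⟨α, x, x', β, hx, hpY, rfl⟩ := hW
    have step_in_Y {α' : FreeMonoid A} (hα : α = p * α') (hY' : Y = α' * (x * β)) :
        TailRewrite R l (p * s) t (α * (x' * β)) := by
      rw [hα, mul_assoc]
      obtain hY'' | ⟨v, t'', hv, ht', hY''⟩ :=
        ih (hR.isIsolated hw.symm) ⟨α', x, x', β, hx, hY', rfl⟩
      · exact .overlap hs hsl hw ht hY''
      · obtain rfl := hR.right_unique hv hw.symm
        rw [hY'', mul_assoc, ← mul_assoc p]
        exact .tail ((presCon R).trans ht (presCon_mul_left w' ht'))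
    obtain ⟨α', hα, hY'⟩ | ⟨γ, rfl, hxβ⟩ := freeMonoid_mul_eq_mul_iff.1 hpY
    · exact step_in_Y hα hY'
    by_cases hγ : γ = 1
    · subst hγ
      exact step_in_Y (α' := 1) (by simp) (by simpa using hxβ.symm)
    · exact (no_straddle hl hR hheads hz hs hw hY hx hγ hxβ.symm).elim

theorem of_reflTransGen (hR : HasUniqueFactors R l)
    (hheads : ∀ u v, IsRelation R u v → DistinctHeads u v) {z t W : FreeMonoid A}
    (hz : z.length < l) (h : Relation.ReflTransGen (RewriteStep (IsRelation R)) (z * t) W) :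
    TailRewrite R l z t W := by
  induction h with
  | refl => exact .tail ((presCon R).refl t)
  | tail _ hW ih =>
    refine (ih.step (by omega) hR hheads (isIsolated_of_length_lt hz) hW).resolve_right ?_
    rintro ⟨z', -, hz', -⟩
    have := hR.two_mul_le_length hz'
    omega

end TailRewrite

theorem presCon_of_presCon_of_mul (hl : 2 ≤ l) (hR : HasUniqueFactors R l)
    (hheads : ∀ u v, IsRelation R u v → DistinctHeads u v) {a : A} {y z : FreeMonoid A}
    (h : presCon R (of a * y) (of a * z)) : presCon R y z := by
  have hrewrite := TailRewrite.of_reflTransGen hR hheads (z := of a) hl (reflTransGen_of_presCon h)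
  generalize hu : of a = u at hrewrite
  generalize hW : u * z = W at hrewrite
  cases hrewrite with
  | tail ht => rwa [mul_left_cancel hW]
  | @overlap p s w w' t t' Y hs hsl hw ht hY =>
    have hp : p = 1 := by
      have hlen := congrArg length hu
      rw [length_of, length_mul] at hlen
      have : s.length ≠ 0 := mt length_eq_zero.1 hs
      exact length_eq_zero.1 (by omega)
    subst hp
    obtain rfl : s = of a := by simpa using hu.symm
    have hwl := hR.two_mul_le_length hw.symm
    refine (hheads _ _ hw ?_).elim
    obtain rfl : of a * z = Y := by simpa using hW
    rw [← hY.head?_eq (by omega) (by omega), head?_mul_of_ne_one hs, head?_mul_of_ne_one hs]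

theorem eq_of_presCon_of_isRelation (hl : 0 < l) (hR : HasUniqueFactors R l) {a : A}
    {u v w : FreeMonoid A} (hw : IsRelation R (of a * u) w) (h : presCon R u v) : u = v := by
  obtain rfl | ⟨_, ⟨p, x, x', s, hx, rfl, -⟩, -⟩ := (reflTransGen_of_presCon h).cases_head
  · rfl
  have hxl := hR.two_mul_le_length hx
  obtain ⟨-, -, hp⟩ := hR.unique hw hx (s := x) (by omega) (p := of a * p) (q := s)
    (by simp only [mul_assoc]) (p' := 1) (q' := 1) (by simp)
  simp at hp

theorem isLeftCancelMul_of_distinctHeads (hl : 2 ≤ l) (hR : HasUniqueFactors R l)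
    (hheads : ∀ p ∈ R, DistinctHeads p.1 p.2) : IsLeftCancelMul (presCon R).Quotient := by
  have hheads' (u v : FreeMonoid A) (h : IsRelation R u v) : DistinctHeads u v :=
    h.elim (hheads _) fun h => (hheads _ h).symm
  rw [isLeftCancelMul_quotient_iff]
  intro x
  induction x using FreeMonoid.inductionOn' with
  | one => simp only [one_mul, imp_self, implies_true]
  | of_mul a x ih =>
    intro y z h
    simp only [mul_assoc] at h
    exact ih y z (presCon_of_presCon_of_mul hl hR hheads' h)

theorem distinctHeads_of_isLeftCancelMul (hl : 0 < l) (hR : HasUniqueFactors R l)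
    (hcancel : IsLeftCancelMul (presCon R).Quotient) {u v : FreeMonoid A} (huv : (u, v) ∈ R)
    (hne : u ≠ v) : DistinctHeads u v := by
  intro hhead
  have huv' : IsRelation R u v := .inl huv
  have hul := hR.two_mul_le_length huv'
  have hvl := hR.two_mul_le_length huv'.symm
  cases u with
  | one => simp at hul; omega
  | of_mul a u' =>
    cases v with
    | one => simp at hvl; omega
    | of_mul b v' =>
      obtain rfl : a = b := Option.some_injective _ hhead
      have h : presCon R u' v' :=
        (isLeftCancelMul_quotient_iff _).1 hcancel _ _ _ (presCon_of_isRelation huv')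
      exact hne (congrArg _ (eq_of_presCon_of_isRelation hl hR huv' h))

theorem isLeftCancelMul_iff_distinctHeads (hl : 2 ≤ l) (hR : HasUniqueFactors R l)
    (hne : ∀ p ∈ R, p.1 ≠ p.2) :
    IsLeftCancelMul (presCon R).Quotient ↔ ∀ p ∈ R, DistinctHeads p.1 p.2 :=
  ⟨fun h p hp => distinctHeads_of_isLeftCancelMul (by omega) hR h hp (hne p hp),
    isLeftCancelMul_of_distinctHeads hl hR⟩

end Cancellation

section Reversal

variable {A : Type*}

/-- Reversal of both sides of a relation. -/
def reverseRelation : Equiv.Perm (FreeMonoid A × FreeMonoid A) :=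
  let e : Equiv.Perm (FreeMonoid A) := Function.Involutive.toPerm reverse fun _ => reverse_reverse
  e.prodCongr e

theorem reverseRelation_apply (p : FreeMonoid A × FreeMonoid A) :
    reverseRelation p = (p.1.reverse, p.2.reverse) :=
  rfl

theorem reverseRelation_reverseRelation (p : FreeMonoid A × FreeMonoid A) :
    reverseRelation (reverseRelation p) = p := by
  simp only [reverseRelation_apply, reverse_reverse]

theorem presCon_reverse {R S : Set (FreeMonoid A × FreeMonoid A)}
    (hRS : Set.MapsTo reverseRelation R S) {x y : FreeMonoid A} (h : presCon R x y) :
    presCon S x.reverse y.reverse := by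
  induction (h : ConGen.Rel _ x y) with
  | of x y hxy => exact ConGen.Rel.of _ _ (hRS hxy)
  | refl x => exact (presCon S).refl _
  | symm _ ih => exact (presCon S).symm ih
  | trans _ _ ih₁ ih₂ => exact (presCon S).trans ih₁ ih₂
  | mul _ _ ih₁ ih₂ =>
    simp only [reverse_mul]
    exact (presCon S).mul ih₂ ih₁

theorem presCon_image_reverseRelation_iff (R : Set (FreeMonoid A × FreeMonoid A))
    {x y : FreeMonoid A} :
    presCon (reverseRelation '' R) x y ↔ presCon R x.reverse y.reverse := by
  have hinv : Set.MapsTo reverseRelation (reverseRelation '' R) R := by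
    rintro _ ⟨p, hp, rfl⟩
    rwa [reverseRelation_reverseRelation]
  refine ⟨presCon_reverse hinv, fun h => ?_⟩
  simpa only [reverse_reverse] using presCon_reverse (Set.mapsTo_image reverseRelation R) h

theorem isLeftCancelMul_image_reverseRelation_iff (R : Set (FreeMonoid A × FreeMonoid A)) :
    IsLeftCancelMul (presCon (reverseRelation '' R)).Quotient ↔
      IsRightCancelMul (presCon R).Quotient := by
  simp only [isLeftCancelMul_quotient_iff, isRightCancelMul_quotient_iff,
    presCon_image_reverseRelation_iff, reverse_mul]
  refine ⟨fun h x y z => ?_, fun h x y z => h _ _ _⟩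
  simpa only [reverse_reverse] using h x.reverse y.reverse z.reverse

theorem presCount_isRightCancelMul (k n : ℕ) :
    presCount (A := A) k n (fun R => IsRightCancelMul (presCon R).Quotient) =
      presCount (A := A) k n (fun R => IsLeftCancelMul (presCon R).Quotient) := by
  refine Nat.card_congr (reverseRelation.finsetCongr.subtypeEquiv fun R => ?_)
  rw [Equiv.finsetCongr_apply, Finset.card_map, Finset.sum_map, Finset.coe_map]
  simp only [Equiv.coe_toEmbedding, isLeftCancelMul_image_reverseRelation_iff,
    reverseRelation_apply, length_reverse]

end Reversal

section Proportion

open Finset Filter Topology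

variable {α β : Type*}

open Classical in
/-- The proportion of the elements of `s` which satisfy `P`; by convention it is `0` if `s` is
empty. -/
noncomputable def proportion (s : Finset α) (P : α → Prop) : ℝ :=
  #{x ∈ s | P x} / #s

theorem proportion_nonneg (s : Finset α) (P : α → Prop) : 0 ≤ proportion s P := by
  unfold proportion
  positivity

theorem proportion_true {s : Finset α} (hs : s.Nonempty) : proportion s (fun _ => True) = 1 := by
  rw [proportion, filter_true, div_self (by exact_mod_cast hs.card_ne_zero)]

theorem proportion_mono {s : Finset α} {P Q : α → Prop} (h : ∀ x ∈ s, P x → Q x) :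
    proportion s P ≤ proportion s Q := by
  classical
  unfold proportion
  gcongr ?_ / _
  refine Nat.cast_le.2 (card_le_card fun x hx => ?_)
  rw [mem_filter] at hx ⊢
  exact ⟨hx.1, h x hx.1 hx.2⟩

theorem proportion_or_le (s : Finset α) (P Q : α → Prop) :
    proportion s (fun x => P x ∨ Q x) ≤ proportion s P + proportion s Q := by
  classical
  simp only [proportion, filter_or, ← add_div]
  gcongr
  exact_mod_cast card_union_le _ _

theorem proportion_exists_le {ι : Type*} [Fintype ι] {s : Finset α} {P : ι → α → Prop} {c : ℝ}
    (h : ∀ i, proportion s (P i) ≤ c) :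
    proportion s (fun x => ∃ i, P i x) ≤ Fintype.card ι * c := by
  classical
  calc proportion s (fun x => ∃ i, P i x) ≤ ∑ i, proportion s (P i) := by
        simp only [proportion, ← sum_div]
        gcongr ?_ / _
        have : ({x ∈ s | ∃ i, P i x} : Finset α) = univ.biUnion fun i => {x ∈ s | P i x} := by
          ext x
          simp
        exact_mod_cast this ▸ card_biUnion_le
    _ ≤ ∑ _i : ι, c := sum_le_sum fun i _ => h i
    _ = Fintype.card ι * c := by rw [sum_const, card_univ, nsmul_eq_mul]

theorem abs_proportion_sub_le {s : Finset α} {P Q B : α → Prop}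
    (h : ∀ x ∈ s, ¬ B x → (P x ↔ Q x)) :
    |proportion s P - proportion s Q| ≤ proportion s B := by
  have hPQ : proportion s P ≤ proportion s fun x => Q x ∨ B x :=
    proportion_mono fun x hx hP => by have := h x hx; tauto
  have hQP : proportion s Q ≤ proportion s fun x => P x ∨ B x :=
    proportion_mono fun x hx hQ => by have := h x hx; tauto
  rw [abs_sub_le_iff]
  constructor
  · linarith [proportion_or_le s Q B]
  · linarith [proportion_or_le s P B]

theorem tendsto_proportion_congr {ι : Type*} {f : Filter ι} {s : ι → Finset α}
    {P Q B : ι → α → Prop} {c : ℝ} (hB : Tendsto (fun i => proportion (s i) (B i)) f (𝓝 0))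
    (h : ∀ᶠ i in f, ∀ x ∈ s i, ¬ B i x → (P i x ↔ Q i x))
    (hP : Tendsto (fun i => proportion (s i) (P i)) f (𝓝 c)) :
    Tendsto (fun i => proportion (s i) (Q i)) f (𝓝 c) := by
  have hdiff : Tendsto (fun i => proportion (s i) (Q i) - proportion (s i) (P i)) f
      (𝓝 0) := by
    refine squeeze_zero_norm' (h.mono fun i hi => ?_) hB
    rw [Real.norm_eq_abs, abs_sub_comm]
    exact abs_proportion_sub_le hi
  simpa using hdiff.add hP

theorem proportion_map (s : Finset α) (e : α ↪ β) (P : β → Prop) :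
    proportion (s.map e) P = proportion s (P ∘ e) := by
  classical
  rw [proportion, proportion, filter_map, card_map, card_map]

theorem card_filter_eq_proportion_mul (s : Finset α) (P : α → Prop) [DecidablePred P] :
    (#{x ∈ s | P x} : ℝ) = proportion s P * #s := by
  obtain rfl | hs := s.eq_empty_or_nonempty
  · simp
  · rw [proportion, div_mul_cancel₀ _ (by exact_mod_cast hs.card_ne_zero)]
    congr!

variable {ι : Type*} {γ : ι → Type*} {s : Finset ι} {t : ∀ i, Finset (γ i)}

theorem proportion_sigma_mul_card (P : (Σ i, γ i) → Prop) :
    proportion (s.sigma t) P * #(s.sigma t) =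
      ∑ i ∈ s, proportion (t i) (fun x => P ⟨i, x⟩) * #(t i) := by
  classical
  simp only [← card_filter_eq_proportion_mul]
  rw [← Nat.cast_sum, ← card_sigma]
  congr 2
  ext ⟨i, x⟩
  simp [and_assoc]

theorem proportion_sigma_le {P : (Σ i, γ i) → Prop} {c : ℝ} (hc : 0 ≤ c)
    (h : ∀ i ∈ s, proportion (t i) (fun x => P ⟨i, x⟩) ≤ c) : proportion (s.sigma t) P ≤ c := by
  obtain hs | hs := (s.sigma t).eq_empty_or_nonempty
  · simpa [proportion, hs] using hc
  refine le_of_mul_le_mul_right ?_ (Nat.cast_pos.2 hs.card_pos)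
  rw [proportion_sigma_mul_card, card_sigma, Nat.cast_sum, mul_sum]
  gcongr with i hi
  exact h i hi

theorem proportion_sigma_fst {N : ℕ} (hN : 0 < N) (ht : ∀ i ∈ s, #(t i) = N) (Q : ι → Prop) :
    proportion (s.sigma t) (fun x => Q x.1) = proportion s Q := by
  classical
  have hfilter : ({x ∈ s.sigma t | Q x.1} : Finset _) = ({i ∈ s | Q i} : Finset ι).sigma t := by
    ext x
    simp [and_right_comm]
  rw [proportion, proportion, hfilter, card_sigma, card_sigma, sum_congr rfl ht,
    sum_congr rfl fun i hi => ht i (mem_filter.1 hi).1, sum_const, sum_const, smul_eq_mul,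
    smul_eq_mul, Nat.cast_mul, Nat.cast_mul, mul_div_mul_right _ _ (by exact_mod_cast hN.ne')]

theorem proportion_sigma_and {Q : ι → Prop} {P : (Σ i, γ i) → Prop} {c : ℝ}
    (h : ∀ i ∈ s, Q i → proportion (t i) (fun x => P ⟨i, x⟩) = c) :
    proportion (s.sigma t) (fun x => Q x.1 ∧ P x) =
      c * proportion (s.sigma t) (fun x => Q x.1) := by
  obtain hs | hs := (s.sigma t).eq_empty_or_nonempty
  · simp [proportion, hs]
  refine mul_right_cancel₀ (b := (#(s.sigma t) : ℝ)) (by exact_mod_cast hs.card_ne_zero) ?_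
  rw [mul_assoc, proportion_sigma_mul_card, proportion_sigma_mul_card, mul_sum]
  refine sum_congr rfl fun i hi => ?_
  by_cases hQ : Q i
  · obtain ht | ht := (t i).eq_empty_or_nonempty
    · simp [ht]
    · simp [hQ, h i hi hQ, proportion_true ht]
  · simp [hQ, proportion]

end Proportion

section Counting

open Finset Function

variable {P A : Type*} [Fintype P] [DecidableEq P] [Fintype A]

/-- In `w (g d) = w (h d)` the letter at `h d` is determined by the letters off the range of `h`
and at `h d'` for `d' < d`, so `w` can be recovered from its restriction to the complement of the
range of `h`; overwriting the values on that range by arbitrary letters therefore loses nothing. -/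
theorem card_filter_comp_eq_comp_mul_le {l : ℕ} [DecidableEq A] {g h : Fin l → P}
    (hh : Injective h) (hgh : ∀ d d', g d = h d' → d' < d) :
    #{w : P → A | w ∘ g = w ∘ h} * Fintype.card A ^ l ≤ Fintype.card A ^ Fintype.card P := by
  calc #{w : P → A | w ∘ g = w ∘ h} * Fintype.card A ^ l
      = #(({w | w ∘ g = w ∘ h} : Finset (P → A)) ×ˢ (univ : Finset (Fin l → A))) := by simp
    _ ≤ #(univ : Finset (P → A)) := ?_
    _ = Fintype.card A ^ Fintype.card P := by simp
  refine card_le_card_of_injOn (fun p => extend h p.2 p.1) (by simp) ?_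
  rintro ⟨w, c⟩ hw ⟨w', c'⟩ hw' heq
  simp only [coe_product, coe_filter, mem_univ, true_and, coe_univ, Set.mem_prod,
    Set.mem_ofPred_eq, Set.mem_univ, and_true] at hw hw' heq
  have hc : c = c' := by simpa only [extend_comp hh] using congrArg (· ∘ h) heq
  have hoff (x : P) (hx : ¬ ∃ d, h d = x) : w x = w' x := by
    simpa only [extend_apply' _ _ _ hx] using congrFun heq x
  have hon (d : Fin l) : w (h d) = w' (h d) := by
    induction d using WellFoundedLT.induction with
    | _ d ih =>
      rw [← comp_apply (f := w), ← comp_apply (f := w'), ← hw, ← hw', comp_apply, comp_apply]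
      by_cases hx : ∃ d', h d' = g d
      · obtain ⟨d', hd'⟩ := hx
        rw [← hd']
        exact ih d' (hgh d d' hd'.symm)
      · exact hoff _ hx
  rw [hc, Prod.mk.injEq]
  refine ⟨funext fun x => ?_, rfl⟩
  by_cases hx : ∃ d, h d = x
  · obtain ⟨d, rfl⟩ := hx
    exact hon d
  · exact hoff x hx

theorem proportion_comp_eq_comp_le [Nonempty A] {l : ℕ} {g h : Fin l → P} (hh : Injective h)
    (hgh : ∀ d d', g d = h d' → d' < d) :
    proportion univ (fun w : P → A => w ∘ g = w ∘ h) ≤ 1 / (Fintype.card A : ℝ) ^ l := by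
  classical
  have hq : (0 : ℝ) < Fintype.card A := by exact_mod_cast Fintype.card_pos
  have hcard : (#{w : P → A | w ∘ g = w ∘ h} * Fintype.card A ^ l : ℝ) ≤
      Fintype.card A ^ Fintype.card P := by
    exact_mod_cast card_filter_comp_eq_comp_mul_le hh hgh
  rw [card_filter_eq_proportion_mul, card_univ, Fintype.card_fun, Nat.cast_pow,
    mul_right_comm] at hcard
  rw [le_div_iff₀ (by positivity)]
  exact le_of_mul_le_mul_right (by rwa [one_mul]) (pow_pos hq (Fintype.card P))

/-- Exchanging the letters at the positions `h d` with the letters of an arbitrary word `c` is an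
involution which turns independent constraints on `w` into independent constraints on `c`. -/
theorem card_filter_forall_ne_mul {κ : Type*} [Fintype κ] [DecidableEq A] {g h : κ → P}
    (hh : Injective h) (hgh : ∀ d d', g d ≠ h d') :
    #{w : P → A | ∀ d, w (g d) ≠ w (h d)} * Fintype.card A ^ Fintype.card κ =
      Fintype.card A ^ Fintype.card P * (Fintype.card A - 1) ^ Fintype.card κ := by
  classical
  let exchange (p : (P → A) × (κ → A)) : (P → A) × (κ → A) := (extend h p.2 p.1, p.1 ∘ h)
  have exchange_exchange : Involutive exchange := by
    rintro ⟨w, c⟩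
    refine Prod.ext (funext fun x => ?_) (extend_comp hh c w)
    by_cases hx : ∃ d, h d = x
    · obtain ⟨d, rfl⟩ := hx
      exact hh.extend_apply _ _ d
    · simp only [exchange, extend_apply' _ _ _ hx]
  have hg (w : P → A) (c : κ → A) (d : κ) : extend h c w (g d) = w (g d) :=
    extend_apply' _ _ _ fun ⟨d', hd'⟩ => hgh d d' hd'.symm
  calc #{w : P → A | ∀ d, w (g d) ≠ w (h d)} * Fintype.card A ^ Fintype.card κ
      = #{p : (P → A) × (κ → A) | ∀ d, p.1 (g d) ≠ p.1 (h d)} := by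
        rw [← univ_product_univ, filter_product_left (fun w : P → A => ∀ d, w (g d) ≠ w (h d)),
          card_product, card_univ, Fintype.card_fun]
    _ = #{p : (P → A) × (κ → A) | ∀ d, p.1 (g d) ≠ p.2 d} :=
        card_equiv exchange_exchange.toPerm fun p => by simp [exchange, hg]
    _ = Fintype.card A ^ Fintype.card P * (Fintype.card A - 1) ^ Fintype.card κ := by
        have hpi (w : P → A) : ({c | ∀ d, w (g d) ≠ c d} : Finset (κ → A)) =
            Fintype.piFinset fun d => univ.erase (w (g d)) := by
          ext c
          simp [eq_comm]
        rw [card_filter, Fintype.sum_prod_type]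
        simp only [← card_filter, hpi, Fintype.card_piFinset]
        simp

theorem proportion_forall_ne [Nonempty A] {κ : Type*} [Fintype κ] {g h : κ → P}
    (hh : Injective h) (hgh : ∀ d d', g d ≠ h d') :
    proportion univ (fun w : P → A => ∀ d, w (g d) ≠ w (h d)) =
      ((Fintype.card A - 1 : ℝ) / Fintype.card A) ^ Fintype.card κ := by
  classical
  have hq : (0 : ℝ) < Fintype.card A := by exact_mod_cast Fintype.card_pos
  have hcard : (#{w : P → A | ∀ d, w (g d) ≠ w (h d)} * Fintype.card A ^ Fintype.card κ : ℝ) =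
      Fintype.card A ^ Fintype.card P * (Fintype.card A - 1) ^ Fintype.card κ := by
    rw [← Nat.cast_pred Fintype.card_pos]
    exact_mod_cast card_filter_forall_ne_mul hh hgh
  rw [card_filter_eq_proportion_mul, card_univ, Fintype.card_fun, Nat.cast_pow,
    mul_right_comm, mul_comm] at hcard
  rw [div_pow, eq_div_iff (by positivity)]
  exact mul_left_cancel₀ (pow_pos hq (Fintype.card P)).ne' hcard

end Counting

section Compositions

open Finset

variable {ι : Type*} [DecidableEq ι]

theorem card_piAntidiag_eq_multichoose (s : Finset ι) (n : ℕ) :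
    #(s.piAntidiag n) = (#s).multichoose n := by
  rw [← card_finsuppAntidiag_nat_eq_multichoose, finsuppAntidiag, card_map, card_attach]

theorem multichoose_mul_add (r n : ℕ) :
    (r + 1).multichoose n * (n + r + 1) = (r + 2).multichoose n * (r + 1) := by
  rw [Nat.multichoose_eq, Nat.multichoose_eq]
  convert Nat.choose_mul_succ_eq (n + r) n using 2 <;> first | omega | (congr 1; omega)

/-- Moving the `i`-th part to another index turns compositions with prescribed `i`-th part
injectively into compositions without `i`-th part. -/
theorem card_filter_piAntidiag_eq_le [Fintype ι] [Nontrivial ι] (n j : ℕ) (i : ι) :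
    #{L ∈ piAntidiag (univ : Finset ι) n | L i = j} ≤ (Fintype.card ι - 1).multichoose n := by
  obtain ⟨i', hi'⟩ := exists_ne i
  have hmem : i' ∈ univ.erase i := by simpa using hi'
  rw [← card_univ, ← card_erase_of_mem (mem_univ i), ← card_piAntidiag_eq_multichoose]
  refine card_le_card_of_injOn (fun L => Function.update (L + Pi.single i' j) i 0) ?_ ?_
  · intro L hL
    simp only [coe_filter, mem_piAntidiag, mem_univ, implies_true, and_true,
      Set.mem_ofPred_eq] at hL
    simp only [mem_coe, mem_piAntidiag]
    constructor
    · rw [sum_update_of_notMem (notMem_erase i univ)]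
      simp only [Pi.add_apply, sum_add_distrib, sum_pi_single', hmem, if_true]
      rw [← hL.1, ← hL.2, sum_erase_add _ _ (mem_univ i)]
    · intro x hx
      refine mem_erase.2 ⟨?_, mem_univ x⟩
      rintro rfl
      simp at hx
  · intro L hL L' hL' h
    simp only [coe_filter, Set.mem_ofPred_eq] at hL hL'
    funext x
    by_cases hx : x = i
    · rw [hx, hL.2, hL'.2]
    · have := congrFun h x
      simpa only [Function.update_of_ne hx, Pi.add_apply, add_left_inj] using this

theorem card_filter_piAntidiag_lt_le [Fintype ι] [Nontrivial ι] (n m : ℕ) (i : ι) :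
    #{L ∈ piAntidiag (univ : Finset ι) n | L i < m} ≤ m * (Fintype.card ι - 1).multichoose n := by
  calc #{L ∈ piAntidiag (univ : Finset ι) n | L i < m}
      ≤ #((range m).biUnion fun j => {L ∈ piAntidiag (univ : Finset ι) n | L i = j}) :=
        card_le_card fun L => by simp +contextual
    _ ≤ m * (Fintype.card ι - 1).multichoose n := by
        simpa using card_biUnion_le_card_mul (range m) _ _
          fun j _ => card_filter_piAntidiag_eq_le n j i

theorem proportion_piAntidiag_lt_le [Fintype ι] [Nontrivial ι] {n : ℕ} (hn : 0 < n) (m : ℕ)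
    (i : ι) :
    proportion (piAntidiag (univ : Finset ι) n) (fun L => L i < m) ≤ m * Fintype.card ι / n := by
  obtain ⟨r, hr⟩ := Nat.exists_eq_add_of_le' (Fintype.one_lt_card (α := ι))
  have hcard : (#{L ∈ piAntidiag (univ : Finset ι) n | L i < m} : ℝ) ≤
      m * (r + 1).multichoose n := by
    have := card_filter_piAntidiag_lt_le n m i
    rw [hr] at this
    exact_mod_cast this
  have hmul : ((r + 1).multichoose n * (n + r + 1) : ℝ) = (r + 2).multichoose n * (r + 1) := by
    exact_mod_cast multichoose_mul_add r n
  have hpos : (0 : ℝ) < (r + 1).multichoose n := by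
    rw [Nat.multichoose_eq]
    exact_mod_cast Nat.choose_pos (by omega)
  have hn' : (0 : ℝ) < n := by exact_mod_cast hn
  rw [card_filter_eq_proportion_mul, card_piAntidiag_eq_multichoose, card_univ, hr] at hcard
  rw [hr, le_div_iff₀ hn']
  set p := proportion (piAntidiag (univ : Finset ι) n) fun L => L i < m
  have hp : 0 ≤ p := proportion_nonneg _ _
  refine le_of_mul_le_mul_right ?_ hpos
  calc p * n * (r + 1).multichoose n
      ≤ p * ((r + 1).multichoose n * (n + r + 1)) := by nlinarith [mul_nonneg hp hpos.le]
    _ = p * (r + 2).multichoose n * (r + 1) := by rw [hmul, mul_assoc]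
    _ ≤ m * (r + 1).multichoose n * (r + 1) := by gcongr
    _ ≤ m * (r + 2 : ℕ) * (r + 1).multichoose n := by
        push_cast
        nlinarith [mul_nonneg (Nat.cast_nonneg (α := ℝ) m) hpos.le]

end Compositions

section WordFamilies

open Finset Function

variable {ι A : Type*}

/-- The positions of the letters in a family of words whose lengths are given by `L`. -/
abbrev Position (L : ι → ℕ) : Type _ :=
  Σ i, Fin (L i)

/-- The family of words with prescribed lengths and prescribed letters in all positions. -/
def wordsOfLetters (x : Σ L : ι → ℕ, Position L → A) (i : ι) : FreeMonoid A :=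
  ofList (List.ofFn fun d => x.2 ⟨i, d⟩)

theorem length_wordsOfLetters (x : Σ L : ι → ℕ, Position L → A) (i : ι) :
    (wordsOfLetters x i).length = x.1 i :=
  List.length_ofFn

theorem getElem?_wordsOfLetters (x : Σ L : ι → ℕ, Position L → A) (a : Position x.1) :
    (wordsOfLetters x a.1).toList[a.2.1]? = some (x.2 a) := by
  simp [wordsOfLetters]

theorem wordsOfLetters_bijective :
    Bijective (wordsOfLetters : (Σ L : ι → ℕ, Position L → A) → ι → FreeMonoid A) := by
  constructor
  · rintro ⟨L, x⟩ ⟨L', x'⟩ h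
    obtain rfl : L = L' := funext fun i =>
      (length_wordsOfLetters ⟨L, x⟩ i).symm.trans <|
        (congrArg length (congrFun h i)).trans (length_wordsOfLetters ⟨L', x'⟩ i)
    congr 1
    funext ⟨i, d⟩
    exact congrFun (List.ofFn_injective (ofList.injective (congrFun h i))) d
  · intro w
    exact ⟨⟨fun i => (w i).length, fun a => (w a.1).toList.get a.2⟩,
      funext fun i => List.ofFn_get (w i).toList⟩

variable [Fintype ι] [DecidableEq ι] [Fintype A]

variable (ι A) in
/-- The families of words of total length `n`, indexed by `ι`. Choosing a family uniformly amounts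
to choosing a composition of `n`, the lengths of the words, and then independent letters. -/
noncomputable def wordFamilies (n : ℕ) : Finset (ι → FreeMonoid A) :=
  ((piAntidiag univ n).sigma fun L => (univ : Finset (Position L → A))).map
    ⟨wordsOfLetters, wordsOfLetters_bijective.injective⟩

theorem mem_wordFamilies {n : ℕ} {w : ι → FreeMonoid A} :
    w ∈ wordFamilies ι A n ↔ ∑ i, (w i).length = n := by
  obtain ⟨x, rfl⟩ := wordsOfLetters_bijective.surjective w
  simp [wordFamilies, length_wordsOfLetters]

theorem wordFamilies_nonempty [Nonempty ι] [Nonempty A] (n : ℕ) :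
    (wordFamilies ι A n).Nonempty := by
  rw [wordFamilies, map_nonempty, sigma_nonempty]
  obtain ⟨i⟩ := ‹Nonempty ι›
  exact ⟨Pi.single i n, by simp [mem_piAntidiag], univ_nonempty⟩

theorem card_position {n : ℕ} {L : ι → ℕ} (hL : L ∈ piAntidiag univ n) :
    Fintype.card (Position L) = n := by
  simpa using (mem_piAntidiag.1 hL).1

theorem proportion_wordFamilies (n : ℕ) (P : (ι → FreeMonoid A) → Prop) :
    proportion (wordFamilies ι A n) P =
      proportion ((piAntidiag univ n).sigma fun L => (univ : Finset (Position L → A)))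
        (fun x => P (wordsOfLetters x)) :=
  proportion_map _ _ _

theorem proportion_length_lt_le [Nontrivial ι] [Nonempty A] {n : ℕ} (hn : 0 < n) (m : ℕ) :
    proportion (wordFamilies ι A n) (fun w => ∃ i, (w i).length < m) ≤
      Fintype.card ι * (m * Fintype.card ι / n) := by
  simp only [proportion_wordFamilies, length_wordsOfLetters]
  rw [proportion_sigma_fst (N := Fintype.card A ^ n) (by positivity) (fun L hL => ?_)
    (fun L : ι → ℕ => ∃ i, L i < m)]
  · exact proportion_exists_le fun i => proportion_piAntidiag_lt_le hn m i
  · rw [card_univ, Fintype.card_fun, card_position hL]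

end WordFamilies

section Repetitions

open Finset Function

variable {ι A : Type*}

/-- No word of length at least `l` occurs twice as a factor of the words of the family `w`, be it
in different words or at different positions of the same word. -/
def FactorsUnique (l : ℕ) (w : ι → FreeMonoid A) : Prop :=
  ∀ ⦃i j : ι⦄ ⦃p s q p' q' : FreeMonoid A⦄,
    l ≤ s.length → w i = p * (s * q) → w j = p' * (s * q') → i = j ∧ p = p'

/-- The `l` positions from `a` on in a word of a family of words. -/
def window {L : ι → ℕ} {l : ℕ} (a : Position L) (ha : a.2 + l ≤ L a.1) (d : Fin l) : Position L :=
  ⟨a.1, a.2 + d, by omega⟩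

theorem eq_of_window_eq_window {L : ι → ℕ} {l : ℕ} {a b : Position L} {ha : a.2 + l ≤ L a.1}
    {hb : b.2 + l ≤ L b.1} {d d' : Fin l} (h : window a ha d = window b hb d') :
    a.1 = b.1 ∧ a.2.1 + d = b.2.1 + d' := by
  have hfst := congrArg Sigma.fst h
  have hsnd := congrArg (fun c : Position L => c.2.1) h
  exact ⟨hfst, hsnd⟩

theorem window_injective {L : ι → ℕ} {l : ℕ} (a : Position L) (ha : a.2 + l ≤ L a.1) :
    Injective (window a ha) := fun _ _ h =>
  Fin.ext (Nat.add_left_cancel (eq_of_window_eq_window h).2)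

/-- `l` equal letters can be read from the positions `a` and `b` on. -/
def IsRepetition {L : ι → ℕ} (l : ℕ) (a b : Position L) (x : Position L → A) : Prop :=
  ∃ (ha : a.2 + l ≤ L a.1) (hb : b.2 + l ≤ L b.1), x ∘ window a ha = x ∘ window b hb

theorem IsRepetition.symm {L : ι → ℕ} {l : ℕ} {a b : Position L} {x : Position L → A} :
    IsRepetition l a b x → IsRepetition l b a x :=
  fun ⟨ha, hb, h⟩ => ⟨hb, ha, h.symm⟩

theorem getElem?_toList_mul_mul {p s q : FreeMonoid A} {d : ℕ} (hd : d < s.length) :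
    (p * (s * q)).toList[p.length + d]? = s.toList[d]? := by
  unfold length at hd ⊢
  rw [toList_mul, toList_mul, List.getElem?_append_right (Nat.le_add_right _ _),
    Nat.add_sub_cancel_left, List.getElem?_append_left hd]

theorem exists_isRepetition_of_not_factorsUnique {l : ℕ} (hl : 0 < l)
    {x : Σ L : ι → ℕ, Position L → A} (hx : ¬ FactorsUnique l (wordsOfLetters x)) :
    ∃ a b : Position x.1, a ≠ b ∧ IsRepetition l a b x.2 := by
  simp only [FactorsUnique, not_forall] at hx
  obtain ⟨i, j, p, s, q, p', q', hs, hi, hj, hij⟩ := hx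
  have hleni : p.length + (s.length + q.length) = x.1 i := by
    rw [← length_wordsOfLetters, hi, length_mul, length_mul]
  have hlenj : p'.length + (s.length + q'.length) = x.1 j := by
    rw [← length_wordsOfLetters, hj, length_mul, length_mul]
  refine ⟨⟨i, p.length, by omega⟩, ⟨j, p'.length, by omega⟩, fun h => hij ?_, ?_⟩
  · obtain rfl : i = j := congrArg Sigma.fst h
    simp only [Sigma.mk.injEq, heq_eq_eq, Fin.mk.injEq, true_and] at h
    exact ⟨rfl, (List.append_inj (hi.symm.trans hj) h).1⟩
  · refine ⟨by simp only; omega, by simp only; omega, funext fun d => Option.some_injective _ ?_⟩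
    rw [comp_apply, comp_apply, ← getElem?_wordsOfLetters, ← getElem?_wordsOfLetters]
    simp only [window, hi, hj]
    rw [getElem?_toList_mul_mul (by omega), getElem?_toList_mul_mul (by omega)]

variable [Fintype ι] [DecidableEq ι] [Fintype A] [Nonempty A]

theorem proportion_isRepetition_le_of_lt {L : ι → ℕ} (l : ℕ) {a b : Position L}
    (hab : a.1 = b.1 → a.2.1 < b.2.1) :
    proportion univ (IsRepetition (A := A) l a b) ≤ 1 / (Fintype.card A : ℝ) ^ l := by
  by_cases h : a.2 + l ≤ L a.1 ∧ b.2 + l ≤ L b.1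
  · refine (proportion_mono fun x _ ⟨_, _, hx⟩ => hx).trans
      (proportion_comp_eq_comp_le (g := window a h.1) (window_injective b h.2) fun d d' hdd' => ?_)
    obtain ⟨hfst, hsnd⟩ := eq_of_window_eq_window hdd'
    have := hab hfst
    omega
  · have hempty (x : Position L → A) : ¬ IsRepetition l a b x := fun ⟨ha, hb, _⟩ => h ⟨ha, hb⟩
    simp [proportion, hempty]

theorem proportion_isRepetition_le {L : ι → ℕ} (l : ℕ) {a b : Position L} (hab : a ≠ b) :
    proportion univ (IsRepetition (A := A) l a b) ≤ 1 / (Fintype.card A : ℝ) ^ l := by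
  by_cases h : a.1 = b.1 → a.2.1 < b.2.1
  · exact proportion_isRepetition_le_of_lt l h
  · refine (proportion_mono fun x _ => IsRepetition.symm).trans
      (proportion_isRepetition_le_of_lt l fun hba => ?_)
    obtain ⟨i, d⟩ := a
    obtain ⟨j, d'⟩ := b
    obtain rfl : j = i := hba
    have hne : d ≠ d' := fun hd => hab (by rw [hd])
    exact lt_of_le_of_ne (not_lt.1 fun hlt => h fun _ => hlt) fun hd => hne (Fin.ext hd).symm

theorem proportion_not_factorsUnique_le {l : ℕ} (hl : 0 < l) (n : ℕ) :
    proportion (wordFamilies ι A n) (fun w => ¬ FactorsUnique l w) ≤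
      n ^ 2 / (Fintype.card A : ℝ) ^ l := by
  rw [proportion_wordFamilies]
  refine proportion_sigma_le (by positivity) fun L hL => ?_
  calc proportion univ (fun x => ¬ FactorsUnique l (wordsOfLetters ⟨L, x⟩))
      ≤ proportion univ (fun x : Position L → A =>
          ∃ c : {c : Position L × Position L // c.1 ≠ c.2}, IsRepetition l c.1.1 c.1.2 x) :=
        proportion_mono fun x _ hx =>
          let ⟨a, b, hab, hrep⟩ := exists_isRepetition_of_not_factorsUnique hl hx
          ⟨⟨(a, b), hab⟩, hrep⟩
    _ ≤ Fintype.card {c : Position L × Position L // c.1 ≠ c.2} *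
          (1 / (Fintype.card A : ℝ) ^ l) :=
        proportion_exists_le fun c => proportion_isRepetition_le l c.2
    _ ≤ n ^ 2 * (1 / (Fintype.card A : ℝ) ^ l) := by
        gcongr
        have := Fintype.card_subtype_le fun c : Position L × Position L => c.1 ≠ c.2
        rw [Fintype.card_prod, card_position hL, ← sq] at this
        exact_mod_cast this
    _ = n ^ 2 / (Fintype.card A : ℝ) ^ l := mul_one_div _ _

end Repetitions

section Heads

open Finset

variable {κ A : Type*}

theorem distinctHeads_wordsOfLetters_iff {ι : Type*} {x : Σ L : ι → ℕ, Position L → A} {i j : ι}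
    (hi : 0 < x.1 i) (hj : 0 < x.1 j) :
    DistinctHeads (wordsOfLetters x i) (wordsOfLetters x j) ↔
      x.2 ⟨i, 0, hi⟩ ≠ x.2 ⟨j, 0, hj⟩ := by
  rw [DistinctHeads, List.head?_eq_getElem?, List.head?_eq_getElem?,
    getElem?_wordsOfLetters x ⟨i, 0, hi⟩, getElem?_wordsOfLetters x ⟨j, 0, hj⟩,
    (Option.some_injective A).ne_iff]

theorem proportion_distinctHeads [Fintype κ] [DecidableEq κ] [Fintype A] [Nonempty A] (n : ℕ) :
    proportion (wordFamilies (κ × Bool) A n)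
        (fun w => (∀ i, 0 < (w i).length) ∧ ∀ j, DistinctHeads (w (j, false)) (w (j, true))) =
      ((Fintype.card A - 1 : ℝ) / Fintype.card A) ^ Fintype.card κ *
        proportion (wordFamilies (κ × Bool) A n) (fun w => ∀ i, 0 < (w i).length) := by
  simp only [proportion_wordFamilies, length_wordsOfLetters]
  refine proportion_sigma_and (Q := fun L : κ × Bool → ℕ => ∀ i, 0 < L i)
    (P := fun x => ∀ j, DistinctHeads (wordsOfLetters x (j, false)) (wordsOfLetters x (j, true)))
    fun L _ hpos => ?_
  have hheads (x : Position L → A) (j : κ) :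
      DistinctHeads (wordsOfLetters ⟨L, x⟩ (j, false)) (wordsOfLetters ⟨L, x⟩ (j, true)) ↔
        x ⟨(j, false), 0, hpos _⟩ ≠ x ⟨(j, true), 0, hpos _⟩ :=
    distinctHeads_wordsOfLetters_iff (x := ⟨L, x⟩) (hpos _) (hpos _)
  simp only [hheads]
  let head (b : Bool) (j : κ) : Position L := ⟨(j, b), 0, hpos _⟩
  refine proportion_forall_ne (g := head false) (h := head true) (fun j j' h => ?_) fun j j' h => ?_
  · exact (Prod.mk.injEq _ _ _ _ ▸ congrArg Sigma.fst h).1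
  · exact Bool.false_ne_true (Prod.mk.injEq _ _ _ _ ▸ congrArg Sigma.fst h).2

end Heads

section InjectiveFamilies

open Finset Function
open scoped Nat

variable {κ α : Type*} [Fintype κ] [DecidableEq α]

theorem image_coe_equiv {R : Finset α} (e : κ ≃ R) : univ.image (fun i => (e i : α)) = R := by
  ext x
  simp only [mem_image, mem_univ, true_and]
  exact ⟨fun ⟨i, hi⟩ => hi ▸ (e i).2, fun hx => ⟨e.symm ⟨x, hx⟩, by simp⟩⟩

theorem card_injective_and_image_eq_card_sigma (P : Finset α → Prop) :
    Nat.card {f : κ → α // Injective f ∧ P (univ.image f)} =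
      Nat.card (Σ R : {R : Finset α // #R = Fintype.card κ ∧ P R}, κ ≃ R.1) := by
  refine (Nat.card_congr (Equiv.ofBijective (fun x => ⟨fun i => (x.2 i : α),
    Subtype.val_injective.comp x.2.injective, by rw [image_coe_equiv]; exact x.1.2.2⟩)
    ⟨?_, ?_⟩)).symm
  · rintro ⟨⟨R, hR⟩, e⟩ ⟨⟨R', hR'⟩, e'⟩ h
    simp only [Subtype.mk.injEq] at h
    obtain rfl : R = R' :=
      (image_coe_equiv e).symm.trans ((congrArg (univ.image ·) h).trans (image_coe_equiv e'))
    congr 1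
    ext i
    exact congrFun h i
  · rintro ⟨f, hf, hP⟩
    refine ⟨⟨⟨univ.image f, card_image_of_injective _ hf, hP⟩,
      Equiv.ofBijective (fun i => ⟨f i, mem_image_of_mem f (mem_univ i)⟩)
        ⟨fun i j h => ?_, ?_⟩⟩, rfl⟩
    · exact hf (congrArg Subtype.val h)
    · rintro ⟨x, hx⟩
      obtain ⟨i, -, rfl⟩ := mem_image.1 hx
      exact ⟨i, rfl⟩

theorem card_injective_and_image (P : Finset α → Prop) :
    Nat.card {f : κ → α // Injective f ∧ P (univ.image f)} =
      Nat.card {R : Finset α // #R = Fintype.card κ ∧ P R} * (Fintype.card κ)! := by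
  classical
  have enum (R : {R : Finset α // #R = Fintype.card κ ∧ P R}) : κ ≃ R.1 :=
    Fintype.equivOfCardEq (by rw [Fintype.card_coe, R.2.1])
  rw [card_injective_and_image_eq_card_sigma, ← Fintype.card_perm,
    ← Nat.card_eq_fintype_card (α := Equiv.Perm κ), ← Nat.card_prod]
  exact Nat.card_congr ((Equiv.sigmaCongrRight fun R =>
    Equiv.equivCongr (Equiv.refl κ) (enum R).symm).trans (Equiv.sigmaEquivProd _ _))

end InjectiveFamilies

section GenericFamilies

open Finset Function

variable {ι κ A : Type*}

/-- The family of relations whose left- and right-hand sides are the words of a family indexed by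
`κ × Bool`. -/
def relations : (κ × Bool → FreeMonoid A) ≃ (κ → FreeMonoid A × FreeMonoid A) :=
  (Equiv.curry κ Bool _).trans (Equiv.piCongrRight fun _ => Equiv.boolArrowEquivProd _)

theorem relations_apply (w : κ × Bool → FreeMonoid A) (i : κ) :
    relations w i = (w (i, false), w (i, true)) :=
  rfl

/-- A family of words is `l`-generic if its words are of length at least `2 * l` and factors of
length at least `l` occur in them at most once. -/
structure IsGeneric (l : ℕ) (w : ι → FreeMonoid A) : Prop where
  two_mul_le_length (i : ι) : 2 * l ≤ (w i).length
  factorsUnique : FactorsUnique l w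

theorem IsGeneric.injective {l : ℕ} {w : ι → FreeMonoid A} (hw : IsGeneric l w) : Injective w := by
  intro i j hij
  have hl : l ≤ (w i).length := (Nat.le_mul_of_pos_left l two_pos).trans (hw.two_mul_le_length i)
  exact (hw.factorsUnique (p := 1) (q := 1) (p' := 1) (q' := 1) hl (by simp) (by simp [hij])).1

variable {l : ℕ} {w : κ × Bool → FreeMonoid A}

theorem IsGeneric.injective_relations (hw : IsGeneric l w) : Injective (relations w) :=
  fun _ _ h => congrArg Prod.fst (hw.injective (congrArg Prod.fst h))

theorem exists_of_isRelation_range_relations {u v : FreeMonoid A}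
    (h : IsRelation (Set.range (relations w)) u v) : ∃ i b, u = w (i, b) ∧ v = w (i, !b) := by
  rcases h with ⟨i, h⟩ | ⟨i, h⟩
  all_goals rw [relations_apply, Prod.mk.injEq] at h
  · exact ⟨i, false, h.1.symm, h.2.symm⟩
  · exact ⟨i, true, h.2.symm, h.1.symm⟩

theorem IsGeneric.hasUniqueFactors (hw : IsGeneric l w) :
    HasUniqueFactors (Set.range (relations w)) l where
  two_mul_le_length h := by
    obtain ⟨i, b, rfl, -⟩ := exists_of_isRelation_range_relations h
    exact hw.two_mul_le_length _
  unique h h' hs hu hv := by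
    obtain ⟨i, b, rfl, rfl⟩ := exists_of_isRelation_range_relations h
    obtain ⟨j, c, rfl, rfl⟩ := exists_of_isRelation_range_relations h'
    obtain ⟨hij, hp⟩ := hw.factorsUnique hs hu hv
    obtain ⟨rfl, rfl⟩ := Prod.mk.inj hij
    exact ⟨rfl, rfl, hp⟩

theorem IsGeneric.isLeftCancelMul_iff (hl : 2 ≤ l) (hw : IsGeneric l w) :
    IsLeftCancelMul (presCon (Set.range (relations w))).Quotient ↔
      ∀ i, DistinctHeads (w (i, false)) (w (i, true)) := by
  rw [isLeftCancelMul_iff_distinctHeads hl hw.hasUniqueFactors, Set.forall_mem_range]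
  · rfl
  · rintro _ ⟨i, rfl⟩ h
    exact Bool.false_ne_true (congrArg Prod.snd (hw.injective h))

variable [Fintype ι] [DecidableEq ι] [Fintype A]

theorem proportion_not_isGeneric_le [Nontrivial ι] [Nonempty A] {n : ℕ} (hn : 0 < n) (hl : 0 < l) :
    proportion (wordFamilies ι A n) (fun w => ¬ IsGeneric l w) ≤
      Fintype.card ι * ((2 * l : ℕ) * Fintype.card ι / n) + n ^ 2 / (Fintype.card A : ℝ) ^ l := by
  calc proportion (wordFamilies ι A n) (fun w => ¬ IsGeneric l w)
      ≤ proportion (wordFamilies ι A n)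
          (fun w => (∃ i, (w i).length < 2 * l) ∨ ¬ FactorsUnique l w) := by
        refine proportion_mono fun w _ hw => ?_
        by_contra! h
        exact hw ⟨h.1, h.2⟩
    _ ≤ _ := (proportion_or_le _ _ _).trans
        (add_le_add (proportion_length_lt_le hn _) (proportion_not_factorsUnique_le hl n))

theorem presCount_mul_factorial [Fintype κ] [DecidableEq κ] (n : ℕ)
    (P : Set (FreeMonoid A × FreeMonoid A) → Prop) :
    (presCount (Fintype.card κ) n P * (Fintype.card κ).factorial : ℝ) =
      proportion (wordFamilies (κ × Bool) A n)
        (fun w => Injective (relations w) ∧ P (Set.range (relations w))) *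
      #(wordFamilies (κ × Bool) A n) := by
  classical
  rw [← card_filter_eq_proportion_mul, presCount]
  norm_cast
  rw [← card_injective_and_image (κ := κ) fun R : Finset (FreeMonoid A × FreeMonoid A) =>
    ∑ p ∈ R, (p.1.length + p.2.length) = n ∧ P (↑R : Set (FreeMonoid A × FreeMonoid A)),
    ← Nat.card_eq_finsetCard]
  refine (Nat.card_congr (relations.subtypeEquiv fun w => ?_)).symm
  rw [mem_filter, mem_wordFamilies, Fintype.sum_prod_type, coe_image, coe_univ, Set.image_univ]
  have hsum (h : Injective (relations w)) :
      ∑ p ∈ univ.image (relations w), (p.1.length + p.2.length) =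
        ∑ i, ∑ b, (w (i, b)).length := by
    simp [sum_image h.injOn, relations_apply, add_comm]
  constructor
  · rintro ⟨hn, hinj, hP⟩
    exact ⟨hinj, (hsum hinj).trans hn, hP⟩
  · rintro ⟨hinj, hn, hP⟩
    exact ⟨(hsum hinj).symm.trans hn, hinj, hP⟩

theorem presCount_div_presCount_true [Fintype κ] [DecidableEq κ] [Nonempty κ] [Nonempty A] (n : ℕ)
    (P : Set (FreeMonoid A × FreeMonoid A) → Prop) :
    (presCount (Fintype.card κ) n P : ℝ) /
        presCount (A := A) (Fintype.card κ) n (fun _ => True) =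
      proportion (wordFamilies (κ × Bool) A n)
          (fun w => Injective (relations w) ∧ P (Set.range (relations w))) /
        proportion (wordFamilies (κ × Bool) A n) (fun w => Injective (relations w)) := by
  have hcard : (#(wordFamilies (κ × Bool) A n) : ℝ) ≠ 0 := by
    exact_mod_cast (wordFamilies_nonempty n).card_ne_zero
  have hfact : ((Fintype.card κ).factorial : ℝ) ≠ 0 := by
    exact_mod_cast (Fintype.card κ).factorial_ne_zero
  have htrue := presCount_mul_factorial (κ := κ) (A := A) n fun _ => True
  simp only [and_true] at htrue
  rw [← mul_div_mul_right _ _ hfact, presCount_mul_factorial, htrue, mul_div_mul_right _ _ hcard]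

end GenericFamilies

section Limits

open Filter Topology Function

variable {ι κ A : Type*}

theorem tendsto_natSqrt_atTop : Tendsto Nat.sqrt atTop atTop :=
  tendsto_atTop.2 fun m => (eventually_ge_atTop (m * m)).mono fun _ hn => Nat.le_sqrt.2 hn

theorem tendsto_div_add_pow_div_pow (c : ℝ) {q : ℝ} (hq : 1 < q) :
    Tendsto (fun l : ℕ => c / l + (l + 1) ^ 4 / q ^ l) atTop (𝓝 0) := by
  have hpow : Tendsto (fun l : ℕ => q * ((l + 1 : ℕ) ^ 4 / q ^ (l + 1))) atTop (𝓝 0) := by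
    simpa using ((tendsto_pow_const_div_const_pow_of_one_lt 4 hq).comp
      (tendsto_add_atTop_nat 1)).const_mul q
  have hsum := (tendsto_const_div_atTop_nhds_zero_nat c).add hpow
  rw [add_zero] at hsum
  refine hsum.congr fun l => ?_
  rw [pow_succ' q, mul_div_assoc', mul_div_mul_left _ _ (by positivity)]
  push_cast
  rfl

theorem tendsto_proportion_not_isGeneric [Fintype ι] [DecidableEq ι] [Nontrivial ι] [Fintype A]
    (hA : 2 ≤ Fintype.card A) :
    Tendsto (fun n => proportion (wordFamilies ι A n) (fun w => ¬ IsGeneric n.sqrt w)) atTop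
      (𝓝 0) := by
  have : Nonempty A := Fintype.card_pos_iff.1 (by omega)
  have hq : (1 : ℝ) < Fintype.card A := by exact_mod_cast hA
  refine squeeze_zero' (Eventually.of_forall fun n => proportion_nonneg _ _) ?_
    ((tendsto_div_add_pow_div_pow (2 * (Fintype.card ι : ℝ) ^ 2) hq).comp tendsto_natSqrt_atTop)
  filter_upwards [eventually_gt_atTop 0] with n hn
  have hl : 0 < n.sqrt := Nat.sqrt_pos.2 hn
  refine (proportion_not_isGeneric_le hn hl).trans (add_le_add ?_ ?_)
  · calc (Fintype.card ι : ℝ) * ((2 * n.sqrt : ℕ) * Fintype.card ι / n)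
        = 2 * (Fintype.card ι : ℝ) ^ 2 * (n.sqrt / n) := by push_cast; ring
      _ ≤ 2 * (Fintype.card ι : ℝ) ^ 2 * (1 / n.sqrt) := by
          have hle : (n.sqrt * n.sqrt : ℝ) ≤ n := by exact_mod_cast Nat.sqrt_le n
          refine mul_le_mul_of_nonneg_left ?_ (by positivity)
          rwa [div_le_div_iff₀ (by exact_mod_cast hn) (by exact_mod_cast hl), one_mul]
      _ = 2 * (Fintype.card ι : ℝ) ^ 2 / n.sqrt := mul_one_div _ _
  · have hlt : (n : ℝ) ≤ (n.sqrt + 1) ^ 2 := by exact_mod_cast (Nat.lt_succ_sqrt' n).le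
    refine div_le_div_of_nonneg_right ?_ (by positivity)
    calc (n : ℝ) ^ 2 ≤ (((n.sqrt : ℝ) + 1) ^ 2) ^ 2 := by gcongr
      _ = ((n.sqrt : ℝ) + 1) ^ 4 := by ring

variable [Fintype κ] [Nonempty κ] [Fintype A]

theorem tendsto_proportion_injective_relations [DecidableEq κ] (hA : 2 ≤ Fintype.card A) :
    Tendsto (fun n => proportion (wordFamilies (κ × Bool) A n) (fun w => Injective (relations w)))
      atTop (𝓝 1) := by
  have : Nonempty A := Fintype.card_pos_iff.1 (by omega)
  refine tendsto_proportion_congr (P := fun _ _ => True) (tendsto_proportion_not_isGeneric hA)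
    (Eventually.of_forall fun n w _ hw => ?_) ?_
  · exact iff_of_true trivial (not_not.1 hw).injective_relations
  · simp only [proportion_true (wordFamilies_nonempty _), tendsto_const_nhds]

theorem tendsto_proportion_distinctHeads [DecidableEq κ] (hA : 2 ≤ Fintype.card A) :
    Tendsto (fun n => proportion (wordFamilies (κ × Bool) A n)
        (fun w => (∀ i, 0 < (w i).length) ∧ ∀ j, DistinctHeads (w (j, false)) (w (j, true))))
      atTop (𝓝 (((Fintype.card A - 1 : ℝ) / Fintype.card A) ^ Fintype.card κ)) := by
  have : Nonempty A := Fintype.card_pos_iff.1 (by omega)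
  have hpos : Tendsto (fun n => proportion (wordFamilies (κ × Bool) A n)
      (fun w => ∀ i, 0 < (w i).length)) atTop (𝓝 1) := by
    refine tendsto_proportion_congr (P := fun _ _ => True) (tendsto_proportion_not_isGeneric hA)
      ((eventually_gt_atTop 0).mono fun n hn w _ hw => iff_of_true trivial fun i => ?_) ?_
    · have := (not_not.1 hw).two_mul_le_length i
      have := Nat.sqrt_pos.2 hn
      omega
    · simp only [proportion_true (wordFamilies_nonempty _), tendsto_const_nhds]
  simpa only [proportion_distinctHeads, mul_one] using hpos.const_mul
    (((Fintype.card A - 1 : ℝ) / Fintype.card A) ^ Fintype.card κ)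

theorem tendsto_proportion_injective_relations_and_isLeftCancelMul [DecidableEq κ]
    (hA : 2 ≤ Fintype.card A) :
    Tendsto (fun n => proportion (wordFamilies (κ × Bool) A n) (fun w =>
        Injective (relations w) ∧
          IsLeftCancelMul (presCon (Set.range (relations w))).Quotient))
      atTop (𝓝 (((Fintype.card A - 1 : ℝ) / Fintype.card A) ^ Fintype.card κ)) := by
  refine tendsto_proportion_congr (tendsto_proportion_not_isGeneric hA) ?_
    (tendsto_proportion_distinctHeads hA)
  filter_upwards [tendsto_natSqrt_atTop.eventually_ge_atTop 2] with n hn w _ hw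
  have hgen : IsGeneric n.sqrt w := not_not.1 hw
  have hpos (i : κ × Bool) : 0 < (w i).length := by
    have := hgen.two_mul_le_length i
    omega
  simp only [hpos, implies_true, hgen.injective_relations, true_and,
    hgen.isLeftCancelMul_iff hn]

theorem tendsto_presCount_isLeftCancelMul_div (hA : 2 ≤ Fintype.card A) :
    Tendsto (fun n => (presCount (A := A) (Fintype.card κ) n
        (fun R => IsLeftCancelMul (presCon R).Quotient) : ℝ) /
        presCount (A := A) (Fintype.card κ) n (fun _ => True)) atTop
      (𝓝 (((Fintype.card A - 1 : ℝ) / Fintype.card A) ^ Fintype.card κ)) := by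
  classical
  have : Nonempty A := Fintype.card_pos_iff.1 (by omega)
  have hratio := (tendsto_proportion_injective_relations_and_isLeftCancelMul (κ := κ) hA).div
    (tendsto_proportion_injective_relations (κ := κ) hA) one_ne_zero
  rw [div_one] at hratio
  exact hratio.congr fun n => (presCount_div_presCount_true n _).symm

end Limits

/-- **Theorem.** For a finite alphabet `A` with `|A| ≥ 2` and a positive integer `k`,
the proportion of `A`-generated `k`-relation presentations of sum relation length `n`
presenting a left cancellative monoid, and likewise the proportion presenting a right
cancellative monoid, both tend to `((|A|-1)/|A|)^k` as `n → ∞`. -/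
theorem statement16 {A : Type*} [Fintype A] (hA : 2 ≤ Fintype.card A)
    (k : ℕ) (hk : 1 ≤ k) :
    Filter.Tendsto (fun n : ℕ =>
        (presCount (A := A) k n (fun R =>
          ∀ x y z : (presCon R).Quotient, x * y = x * z → y = z) : ℝ) /
        (presCount (A := A) k n (fun _ => True) : ℝ))
      Filter.atTop
      (nhds (((Fintype.card A - 1 : ℝ) / (Fintype.card A : ℝ)) ^ k)) ∧
    Filter.Tendsto (fun n : ℕ =>
        (presCount (A := A) k n (fun R =>
          ∀ x y z : (presCon R).Quotient, y * x = z * x → y = z) : ℝ) /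
        (presCount (A := A) k n (fun _ => True) : ℝ))
      Filter.atTop
      (nhds (((Fintype.card A - 1 : ℝ) / (Fintype.card A : ℝ)) ^ k)) := by
  have : Nonempty (Fin k) := ⟨⟨0, hk⟩⟩
  have hleft := tendsto_presCount_isLeftCancelMul_div (κ := Fin k) hA
  rw [Fintype.card_fin] at hleft
  have hright := hleft
  simp only [← presCount_isRightCancelMul] at hright
  simp only [isLeftCancelMul_iff] at hleft
  simp only [isRightCancelMul_iff] at hright
  exact ⟨hleft, hright⟩
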